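/- Σ_{k=1}^∞ λ(2k)/((2k+1)·2^{2k}) = -(log 2)/4 + G/π, where λ(s) = Σ_{m=0}^∞ 1/(2m+1)^s and G is Catalan's constant. -/

import Mathlib

open Real

noncomputable def dirichletLambda (s : ℕ) : ℝ := ∑' m : ℕ, 1 / (2 * (m : ℝ) + 1) ^ s

/-!
The partial fractions of the tangent, expanded into geometric series, give
`∑ λ(2k) x ^ (2k) = (π x / 4) tan (π x / 2)` for `|x| < 1`. Integrating over `[0, 1 / 2]` turns the
series of the theorem into `(2 / π) ∫ y tan y` over `[0, π / 4]`, which integration by parts reduces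
to `∫ log cos`. That integral is half the sum minus half the difference of `∫ log sin` and
`∫ log cos`: the sum is known from the double angle formula, and the difference is
`∫ log tan = ∫₀¹ log x / (1 + x²) dx = -G`.
-/

open MeasureTheory intervalIntegral

/-- Catalan's constant `G = 1 - 1/3² + 1/5² - ⋯`. -/
noncomputable def catalanConstant : ℝ := ∑' n : ℕ, (-1 : ℝ) ^ n / (2 * (n : ℝ) + 1) ^ 2

section TermwiseIntegration

variable {ι : Type*} [Countable ι] {c : ι → ℝ} {e : ι → ℕ} {f : ℝ → ℝ}

theorem hasSum_integral_of_hasSum_mul_pow {a : ℝ}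
    (hf : ∀ x ∈ Set.uIcc 0 a, HasSum (fun i => c i * x ^ e i) (f x)) :
    HasSum (fun i => c i * (a ^ (e i + 1) / (e i + 1))) (∫ x in (0 : ℝ)..a, f x) := by
  have hbound (i : ι) (x : ℝ) (hx : x ∈ Set.uIoc 0 a) : ‖c i * x ^ e i‖ ≤ |c i * a ^ e i| := by
    have hxa : |x| ≤ |a| := by
      simpa using Set.abs_sub_left_of_mem_uIcc (Set.uIoc_subset_uIcc hx)
    simp only [norm_eq_abs, abs_mul, abs_pow]
    gcongr
  have h := intervalIntegral.hasSum_integral_of_dominated_convergence (μ := volume)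
    (fun i _ => |c i * a ^ e i|)
    (fun i => (by fun_prop : Continuous fun x : ℝ => c i * x ^ e i).aestronglyMeasurable)
    (fun i => .of_forall (hbound i))
    (.of_forall fun _ _ => (hf a Set.right_mem_uIcc).summable.abs)
    intervalIntegrable_const
    (.of_forall fun x hx => hf x (Set.uIoc_subset_uIcc hx))
  simpa [integral_pow] using h

theorem intervalIntegrable_pow_mul_log (n : ℕ) (a b : ℝ) :
    IntervalIntegrable (fun x => x ^ n * log x) volume a b :=
  intervalIntegrable_log'.continuousOn_mul (by fun_prop)

theorem integral_pow_mul_log (n : ℕ) (a b : ℝ) :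
    ∫ x in a..b, x ^ n * log x =
      (b ^ (n + 1) * log b / (n + 1) - b ^ (n + 1) / (n + 1) ^ 2) -
        (a ^ (n + 1) * log a / (n + 1) - a ^ (n + 1) / (n + 1) ^ 2) := by
  refine integral_eq_of_hasDerivAt_off_countable
    (fun x => x ^ (n + 1) * log x / (n + 1) - x ^ (n + 1) / (n + 1) ^ 2) _
    (Set.countable_singleton 0) ?_ ?_ (intervalIntegrable_pow_mul_log n a b)
  · have hcont : Continuous fun x : ℝ => x ^ (n + 1) * log x := by
      have h : Continuous fun x : ℝ => x ^ n * (x * log x) := by fun_prop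
      simpa only [pow_succ, mul_assoc] using h
    fun_prop
  · rintro x ⟨-, hx : x ≠ 0⟩
    have hpow := hasDerivAt_pow (n + 1) x
    refine (((hpow.mul (hasDerivAt_log hx)).div_const _).sub (hpow.div_const _)).congr_deriv ?_
    push_cast
    field_simp
    ring

theorem hasSum_integral_mul_log_of_hasSum_mul_pow
    (hc : Summable fun i => c i / ((e i : ℝ) + 1) ^ 2)
    (hf : ∀ x ∈ Set.Ioo 0 1, HasSum (fun i => c i * x ^ e i) (f x)) :
    HasSum (fun i => -(c i / ((e i : ℝ) + 1) ^ 2)) (∫ x in (0 : ℝ)..1, f x * log x) := by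
  have hmoment (n : ℕ) : ∫ x in Set.Ioo (0 : ℝ) 1, x ^ n * log x = -(1 / ((n : ℝ) + 1) ^ 2) := by
    rw [← integral_Ioc_eq_integral_Ioo, ← integral_of_le zero_le_one, integral_pow_mul_log]
    simp
  have hintegrable (n : ℕ) : IntegrableOn (fun x => x ^ n * log x) (Set.Ioo 0 1) :=
    (intervalIntegrable_iff_integrableOn_Ioo_of_le zero_le_one).mp
      (intervalIntegrable_pow_mul_log n 0 1)
  have hnorm (i : ι) : ∫ x in Set.Ioo (0 : ℝ) 1, ‖c i * (x ^ e i * log x)‖ =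
      |c i / ((e i : ℝ) + 1) ^ 2| := by
    have hcongr : Set.EqOn (fun x : ℝ => ‖c i * (x ^ e i * log x)‖)
        (fun x => -|c i| * (x ^ e i * log x)) (Set.Ioo 0 1) := fun x hx => by
      simp [abs_of_pos hx.1, abs_of_neg (log_neg hx.1 hx.2)]
    rw [setIntegral_congr_fun measurableSet_Ioo hcongr, MeasureTheory.integral_const_mul,
      hmoment, abs_div, abs_of_pos (by positivity : 0 < ((e i : ℝ) + 1) ^ 2)]
    ring
  have h := hasSum_integral_of_summable_integral_norm (μ := volume.restrict (Set.Ioo 0 1))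
    (fun i => (hintegrable (e i)).const_mul (c i)) (by simpa only [hnorm] using hc.abs)
  have hsum : Set.EqOn (fun x => ∑' i, c i * (x ^ e i * log x)) (fun x => f x * log x)
      (Set.Ioo 0 1) := fun x hx => by
    simpa only [mul_assoc] using ((hf x hx).mul_right (log x)).tsum_eq
  rw [setIntegral_congr_fun measurableSet_Ioo hsum, ← integral_Ioc_eq_integral_Ioo,
    ← integral_of_le zero_le_one] at h
  refine h.congr_fun fun i => ?_
  rw [MeasureTheory.integral_const_mul, hmoment]
  ring

end TermwiseIntegration

section OddReciprocals

theorem summable_one_div_two_mul_add_one_pow {s : ℕ} (hs : 1 < s) :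
    Summable fun m : ℕ => 1 / (2 * (m : ℝ) + 1) ^ s := by
  have hinj : Function.Injective fun m : ℕ => 2 * m + 1 := fun a b h => by simpa using h
  simpa [Function.comp_def] using
    (Real.summable_one_div_nat_pow.mpr hs).comp_injective hinj

theorem hasSum_dirichletLambda {s : ℕ} (hs : 1 < s) :
    HasSum (fun m : ℕ => 1 / (2 * (m : ℝ) + 1) ^ s) (dirichletLambda s) :=
  (summable_one_div_two_mul_add_one_pow hs).hasSum

theorem summable_neg_one_pow_div_two_mul_add_one_sq :
    Summable fun n : ℕ => (-1 : ℝ) ^ n / (2 * (n : ℝ) + 1) ^ 2 :=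
  (summable_one_div_two_mul_add_one_pow one_lt_two).of_norm_bounded fun n => by simp

end OddReciprocals

section GeneratingFunction

theorem two_mul_cot_two_mul (z : ℂ) :
    2 * Complex.cot (2 * z) = Complex.cot z - Complex.tan z := by
  rw [Complex.cot_eq_cos_div_sin, Complex.cot_eq_cos_div_sin, Complex.tan_eq_sin_div_cos,
    Complex.sin_two_mul, Complex.cos_two_mul']
  by_cases hs : Complex.sin z = 0
  · simp [hs]
  by_cases hc : Complex.cos z = 0
  · simp [hc]
  field_simp

theorem hasSum_cotTerm {z : ℂ} (hz : z ∈ Complex.integerComplement) :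
    HasSum (cotTerm z) (π * Complex.cot (π * z) - 1 / z) := by
  rw [cot_series_rep' hz]
  exact (summable_cotTerm hz).hasSum

theorem half_mem_integerComplement {z : ℂ} (hz : z ∈ Complex.integerComplement) :
    z / 2 ∈ Complex.integerComplement := by
  rintro ⟨n, hn⟩
  refine hz ⟨2 * n, ?_⟩
  push_cast
  rw [hn]
  ring

-- The odd-indexed terms of the cotangent series at `z` form the cotangent series at `z / 2`.
theorem hasSum_pi_div_two_mul_tan {z : ℂ} (hz : z ∈ Complex.integerComplement) :
    HasSum (fun m : ℕ => 2 * z / ((2 * (m : ℂ) + 1) ^ 2 - z ^ 2))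
      (π / 2 * Complex.tan (π * z / 2)) := by
  have hodd : HasSum (fun m => cotTerm z (2 * m + 1))
      ((π * Complex.cot (π * (z / 2)) - 1 / (z / 2)) / 2) := by
    refine ((hasSum_cotTerm (half_mem_integerComplement hz)).div_const 2).congr_fun fun m => ?_
    simp only [cotTerm]
    push_cast
    rw [show z - (2 * m + 1 + 1) = 2 * (z / 2 - (m + 1)) by ring,
      show z + (2 * m + 1 + 1) = 2 * (z / 2 + (m + 1)) by ring]
    simp only [one_div, mul_inv]
    ring
  have heven : HasSum (fun m => cotTerm z (2 * m)) (∑' m, cotTerm z (2 * m)) :=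
    ((summable_cotTerm hz).comp_injective (mul_right_injective₀ two_ne_zero)).hasSum
  have hsplit := (heven.even_add_odd hodd).unique (hasSum_cotTerm hz)
  have hcot := two_mul_cot_two_mul (π * z / 2)
  rw [show 2 * (π * z / 2) = π * z by ring] at hcot
  have hvalue : π / 2 * Complex.tan (π * z / 2) = -∑' m, cotTerm z (2 * m) := by
    rw [← mul_div_assoc, one_div_div, sub_div, div_right_comm, div_self two_ne_zero] at hsplit
    linear_combination hsplit + π / 2 * hcot
  rw [hvalue]
  refine heven.neg.congr_fun fun m => ?_
  rw [cotTerm_identity hz, mul_one_div, ← div_neg]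
  push_cast
  ring

theorem hasSum_div_pow_two_mul_succ {𝕜 : Type*} [NormedField 𝕜] {z a : 𝕜} (h : ‖z‖ < ‖a‖) :
    HasSum (fun k : ℕ => (z / a) ^ (2 * (k + 1))) (z ^ 2 / (a ^ 2 - z ^ 2)) := by
  have ha : a ≠ 0 := norm_pos_iff.mp ((norm_nonneg z).trans_lt h)
  have hratio : ‖(z / a) ^ 2‖ < 1 := by
    rw [norm_pow, norm_div]
    exact pow_lt_one₀ (by positivity) ((div_lt_one (norm_pos_iff.mpr ha)).mpr h) two_ne_zero
  have hvalue : z ^ 2 / (a ^ 2 - z ^ 2) = (z / a) ^ 2 * (1 - (z / a) ^ 2)⁻¹ := by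
    rw [div_pow, one_sub_div (pow_ne_zero 2 ha), inv_div,
      div_mul_div_cancel₀ (pow_ne_zero 2 ha)]
  rw [hvalue]
  refine ((hasSum_geometric_of_norm_lt_one hratio).mul_left _).congr_fun fun k => ?_
  rw [pow_mul, pow_succ']

theorem norm_two_mul_natCast_add_one (m : ℕ) : ‖2 * (m : ℂ) + 1‖ = 2 * (m : ℝ) + 1 := by
  exact_mod_cast Complex.norm_natCast (2 * m + 1)

theorem summable_div_pow_two_mul_succ {z : ℂ} (hz : ‖z‖ < 1) :
    Summable fun p : ℕ × ℕ => (z / (2 * (p.1 : ℂ) + 1)) ^ (2 * (p.2 + 1)) := by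
  have hgeom : Summable fun k : ℕ => (‖z‖ ^ 2) ^ k :=
    summable_geometric_of_lt_one (by positivity) (pow_lt_one₀ (norm_nonneg z) hz two_ne_zero)
  refine ((summable_one_div_two_mul_add_one_pow one_lt_two).mul_of_nonneg
    ((summable_nat_add_iff 1).mpr hgeom) (fun _ => by positivity)
    (fun _ => by positivity)).of_norm_bounded fun p => ?_
  have hodd : 1 ≤ 2 * (p.1 : ℝ) + 1 := by linarith [p.1.cast_nonneg (α := ℝ)]
  rw [norm_pow, norm_div, norm_two_mul_natCast_add_one, div_pow, pow_mul ‖z‖,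
    div_eq_mul_one_div, mul_comm]
  gcongr
  lia

theorem hasSum_dirichletLambda_mul_pow {z : ℂ} (hz : ‖z‖ < 1) :
    HasSum (fun k : ℕ => (dirichletLambda (2 * (k + 1)) : ℂ) * z ^ (2 * (k + 1)))
      (π * z / 4 * Complex.tan (π * z / 2)) := by
  rcases eq_or_ne z 0 with rfl | hz0
  · simp
  have hmem : z ∈ Complex.integerComplement := by
    rintro ⟨n, rfl⟩
    rw [Complex.norm_intCast, ← Int.cast_abs] at hz
    exact hz0 (by simpa using Int.abs_lt_one_iff.mp (mod_cast hz))
  have hdouble := (summable_div_pow_two_mul_succ hz).hasSum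
  have hodd (m : ℕ) : 1 ≤ ‖2 * (m : ℂ) + 1‖ := by
    rw [norm_two_mul_natCast_add_one]
    linarith [m.cast_nonneg (α := ℝ)]
  have hrows := hdouble.prod_fiberwise fun m =>
    hasSum_div_pow_two_mul_succ (z := z) (a := 2 * (m : ℂ) + 1) (hz.trans_le (hodd m))
  have htan : HasSum (fun m : ℕ => z ^ 2 / ((2 * (m : ℂ) + 1) ^ 2 - z ^ 2))
      (π * z / 4 * Complex.tan (π * z / 2)) := by
    rw [show π * z / 4 * Complex.tan (π * z / 2) =
      z / 2 * (π / 2 * Complex.tan (π * z / 2)) by ring]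
    refine ((hasSum_pi_div_two_mul_tan hmem).mul_left (z / 2)).congr_fun fun m => ?_
    ring
  rw [hrows.unique htan] at hdouble
  refine ((Equiv.prodComm ℕ ℕ).hasSum_iff.mpr hdouble).prod_fiberwise fun k => ?_
  have hcolumn := Complex.hasSum_ofReal.mpr (hasSum_dirichletLambda (s := 2 * (k + 1)) (by lia))
  refine (hcolumn.mul_right (z ^ (2 * (k + 1)))).congr_fun fun m => ?_
  simp [div_pow, div_eq_inv_mul (z ^ _)]

theorem hasSum_dirichletLambda_mul_pow_real {x : ℝ} (hx : |x| < 1) :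
    HasSum (fun k : ℕ => dirichletLambda (2 * (k + 1)) * x ^ (2 * (k + 1)))
      (π * x / 4 * tan (π * x / 2)) := by
  have h := hasSum_dirichletLambda_mul_pow (z := x) (by simpa using hx)
  exact_mod_cast h

end GeneratingFunction

section LogTrigonometricIntegrals

theorem ae_sin_ne_zero_and_cos_ne_zero : ∀ᵐ x : ℝ, sin x ≠ 0 ∧ cos x ≠ 0 := by
  have hsin := analyticOnNhd_sin.preimage_zero_mem_codiscrete (x := π / 2) (by simp)
  have hcos := analyticOnNhd_cos.preimage_zero_mem_codiscrete (x := 0) (by simp)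
  rw [← Measure.restrict_univ (μ := volume)]
  exact ae_restrict_le_codiscreteWithin .univ (Filter.inter_mem hsin hcos)

theorem integral_log_tan (a b : ℝ) :
    ∫ x in a..b, log (tan x) = (∫ x in a..b, log (sin x)) - ∫ x in a..b, log (cos x) := by
  have hsin : IntervalIntegrable (fun x => log (sin x)) volume a b := intervalIntegrable_log_sin
  have hcos : IntervalIntegrable (fun x => log (cos x)) volume a b := intervalIntegrable_log_cos
  rw [← intervalIntegral.integral_sub hsin hcos]
  refine integral_congr_ae ?_
  filter_upwards [ae_sin_ne_zero_and_cos_ne_zero] with x ⟨hs, hc⟩ _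
  rw [tan_eq_sin_div_cos, log_div hs hc]

theorem integral_log_sin_add_integral_log_cos (a b : ℝ) :
    (∫ x in a..b, log (sin x)) + ∫ x in a..b, log (cos x) =
      (∫ x in 2 * a..2 * b, log (sin x)) / 2 - (b - a) * log 2 := by
  have hdouble : ∫ x in a..b, log (sin (2 * x)) = (∫ x in 2 * a..2 * b, log (sin x)) / 2 := by
    rw [integral_comp_mul_left (fun x => log (sin x)) two_ne_zero, smul_eq_mul, inv_mul_eq_div]
  have hintegrable : IntervalIntegrable (fun x => log (sin (2 * x))) volume a b := by
    simpa using (intervalIntegrable_log_sin (a := 2 * a) (b := 2 * b)).comp_mul_left (c := 2)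
  have hsin : IntervalIntegrable (fun x => log (sin x)) volume a b := intervalIntegrable_log_sin
  have hcos : IntervalIntegrable (fun x => log (cos x)) volume a b := intervalIntegrable_log_cos
  rw [← intervalIntegral.integral_add hsin hcos, ← hdouble, ← smul_eq_mul,
    ← intervalIntegral.integral_const,
    ← intervalIntegral.integral_sub hintegrable intervalIntegrable_const]
  refine integral_congr_ae ?_
  filter_upwards [ae_sin_ne_zero_and_cos_ne_zero] with x ⟨hs, hc⟩ _
  rw [sin_two_mul, log_mul (mul_ne_zero two_ne_zero hs) hc, log_mul two_ne_zero hs]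
  ring

theorem integral_comp_tan (f : ℝ → ℝ) (a b : ℝ) :
    ∫ y in arctan a..arctan b, f (tan y) = ∫ x in a..b, (1 + x ^ 2)⁻¹ * f x := by
  rw [← integral_deriv_smul_comp_of_deriv_nonneg continuous_arctan.continuousOn
    (fun x _ => hasDerivAt_arctan' x) fun x _ => by positivity]
  simp [tan_arctan]

theorem integral_log_div_one_add_sq :
    ∫ x in (0 : ℝ)..1, (1 + x ^ 2)⁻¹ * log x = -catalanConstant := by
  have hgeom (x : ℝ) (hx : x ∈ Set.Ioo (0 : ℝ) 1) :
      HasSum (fun n : ℕ => (-1) ^ n * x ^ (2 * n)) (1 + x ^ 2)⁻¹ := by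
    have hx2 : ‖-x ^ 2‖ < 1 := by
      simpa using (abs_of_pos hx.1).trans_lt hx.2
    simpa [neg_pow (x ^ 2), pow_mul] using hasSum_geometric_of_norm_lt_one hx2
  have h := hasSum_integral_mul_log_of_hasSum_mul_pow
    (by exact_mod_cast summable_neg_one_pow_div_two_mul_add_one_sq) hgeom
  rw [← h.tsum_eq, tsum_neg, catalanConstant]
  norm_cast

theorem integral_log_cos_zero_pi_div_four :
    ∫ x in (0 : ℝ)..(π / 4), log (cos x) = catalanConstant / 2 - π / 4 * log 2 := by
  have hdiff := integral_log_tan 0 (π / 4)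
  have htan := integral_comp_tan log 0 1
  have hsum := integral_log_sin_add_integral_log_cos 0 (π / 4)
  rw [arctan_zero, arctan_one, integral_log_div_one_add_sq] at htan
  rw [mul_zero, show 2 * (π / 4) = π / 2 by ring, integral_log_sin_zero_pi_div_two] at hsum
  linarith

theorem integral_mul_tan {a b : ℝ} (h : ∀ x ∈ Set.uIcc a b, cos x ≠ 0) :
    ∫ x in a..b, x * tan x =
      a * log (cos a) - b * log (cos b) + ∫ x in a..b, log (cos x) := by
  have hderiv (x : ℝ) (hx : x ∈ Set.uIcc a b) : HasDerivAt (fun x => -log (cos x)) (tan x) x := by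
    refine ((hasDerivAt_cos x).log (h x hx)).neg.congr_deriv ?_
    rw [tan_eq_sin_div_cos, neg_div, neg_neg]
  have htan : IntervalIntegrable tan volume a b :=
    ContinuousOn.intervalIntegrable fun x hx => (continuousAt_tan.mpr (h x hx)).continuousWithinAt
  rw [integral_mul_deriv_eq_deriv_mul (fun x _ => hasDerivAt_id' x) hderiv
    intervalIntegrable_const htan]
  simp only [one_mul, intervalIntegral.integral_neg]
  ring

end LogTrigonometricIntegrals

theorem hasSum_dirichletLambda_mul_pow_div {a : ℝ} (ha : |a| < 1) :
    HasSum (fun k : ℕ => dirichletLambda (2 * (k + 1)) *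
        (a ^ (2 * (k + 1) + 1) / (((2 * (k + 1) : ℕ) : ℝ) + 1)))
      ((∫ y in (0 : ℝ)..π / 2 * a, y * tan y) / π) := by
  have h := hasSum_integral_of_hasSum_mul_pow (a := a) fun x hx =>
    hasSum_dirichletLambda_mul_pow_real (x := x) <| lt_of_le_of_lt
      (by simpa using Set.abs_sub_left_of_mem_uIcc hx) ha
  convert h using 1
  have hscale := integral_comp_mul_left (a := 0) (b := a) (fun y => y * tan y)
    (c := π / 2) (by positivity)
  rw [mul_zero, smul_eq_mul, inv_div] at hscale
  calc (∫ y in (0 : ℝ)..π / 2 * a, y * tan y) / π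
      = 1 / 2 * ∫ x in (0 : ℝ)..a, π / 2 * x * tan (π / 2 * x) := by
        rw [hscale]
        field_simp
    _ = ∫ x in (0 : ℝ)..a, π * x / 4 * tan (π * x / 2) := by
        rw [← intervalIntegral.integral_const_mul]
        refine integral_congr fun x _ => ?_
        ring_nf

theorem integral_mul_tan_zero_pi_div_four :
    ∫ y in (0 : ℝ)..(π / 4), y * tan y = catalanConstant / 2 - π / 8 * log 2 := by
  have hcos (x : ℝ) (hx : x ∈ Set.uIcc 0 (π / 4)) : cos x ≠ 0 := by
    rw [Set.uIcc_of_le (by positivity)] at hx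
    exact (cos_pos_of_mem_Ioo ⟨by linarith [hx.1, pi_pos], by linarith [hx.2, pi_pos]⟩).ne'
  rw [integral_mul_tan hcos, integral_log_cos_zero_pi_div_four, cos_pi_div_four,
    log_div (by positivity) two_ne_zero, log_sqrt zero_le_two]
  ring

theorem lambda_series_one :
    ∑' k : ℕ, dirichletLambda (2 * (k + 1)) / ((2 * ((k : ℝ) + 1) + 1) * 2 ^ (2 * (k + 1)))
      = -(Real.log 2) / 4 + (∑' n : ℕ, (-1 : ℝ) ^ n / (2 * (n : ℝ) + 1) ^ 2) / π := by
  rw [← catalanConstant]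
  have h := (hasSum_dirichletLambda_mul_pow_div (a := 1 / 2) (by norm_num [abs_of_pos])).mul_left 2
  rw [show π / 2 * (1 / 2) = π / 4 by ring, integral_mul_tan_zero_pi_div_four] at h
  calc _ = 2 * ((catalanConstant / 2 - π / 8 * log 2) / π) := by
        rw [← h.tsum_eq]
        refine tsum_congr fun k => ?_
        push_cast
        rw [pow_succ, one_div_pow]
        field_simp
    _ = _ := by
        field_simp
        ring
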